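/- arXiv:2511.13140 — 2 statements merged into one kernel-verified Lean document; each statement's English description precedes it below -/
import Mathlib

section
/- The complete cubic Halin graph G_2 admits a star 5-edge coloring. -/
/-- A star `k`-edge coloring of a simple graph `G`: a proper edge coloring with colors
`0, …, k-1` such that the edges of every path of length 4 and of every cycle of length 4
receive at least 3 distinct colors. -/
def IsStarEdgeColoring {V : Type*} (G : SimpleGraph V) (k : ℕ) (c : Sym2 V → ℕ) : Prop :=
  (∀ e ∈ G.edgeSet, c e < k) ∧
  (∀ a b b' : V, G.Adj a b → G.Adj a b' → b ≠ b' → c s(a, b) ≠ c s(a, b')) ∧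
  (∀ v0 v1 v2 v3 v4 : V, ([v0, v1, v2, v3, v4] : List V).Nodup →
    G.Adj v0 v1 → G.Adj v1 v2 → G.Adj v2 v3 → G.Adj v3 v4 →
    3 ≤ ({c s(v0, v1), c s(v1, v2), c s(v2, v3), c s(v3, v4)} : Finset ℕ).card) ∧
  (∀ v0 v1 v2 v3 : V, ([v0, v1, v2, v3] : List V).Nodup →
    G.Adj v0 v1 → G.Adj v1 v2 → G.Adj v2 v3 → G.Adj v3 v0 →
    3 ≤ ({c s(v0, v1), c s(v1, v2), c s(v2, v3), c s(v3, v0)} : Finset ℕ).card)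

/-- Vertices of the complete cubic Halin graph `G_l`: the root (`none`), and for
each `1 ≤ j ≤ l` the level-`j` vertices `some ⟨(a, bs), _⟩` with `a : Fin 3` and
`bs : List (Fin 2)` of length `j - 1` (so `bs.length < l`). -/
abbrev HalinVert (l : ℕ) := Option { p : Fin 3 × List (Fin 2) // p.2.length < l }

/-- The value of a binary string, most significant digit first. -/
def binVal (bs : List (Fin 2)) : ℕ := bs.foldl (fun n b => 2 * n + b.val) 0

/-- The position of a leaf `(a, bs)` in the lexicographic order of leaf indices. -/
def leafIdx (l : ℕ) (p : Fin 3 × List (Fin 2)) : ℕ := p.1.val * 2 ^ (l - 1) + binVal p.2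

/-- Base adjacency relation for `G_l`: the root is adjacent to the three level-1
vertices; every non-leaf vertex is adjacent to its two children (obtained by
appending an element of `Fin 2` to its index); and the leaves (whose index lists
have length `l - 1`) are joined in a cycle following the lexicographic order of
their indices. -/
def halinRel (l : ℕ) : HalinVert l → HalinVert l → Prop
  | none, some q => q.1.2 = []
  | some p, some q =>
      (∃ d : Fin 2, q.1.1 = p.1.1 ∧ q.1.2 = p.1.2 ++ [d]) ∨
      (p.1.2.length = l - 1 ∧ q.1.2.length = l - 1 ∧
        (leafIdx l q.1 = leafIdx l p.1 + 1 ∨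
          (leafIdx l p.1 = 3 * 2 ^ (l - 1) - 1 ∧ leafIdx l q.1 = 0)))
  | _, _ => False

/-- The complete cubic Halin graph `G_l`, whose characteristic tree is the complete
tree `T_l` with `l` levels. -/
def completeHalin (l : ℕ) : SimpleGraph (HalinVert l) := SimpleGraph.fromRel (halinRel l)

/-!
Orient each pair of colors `{x, y}` by letting `y → x` whenever some `y`-colored edge has
`x`-colored edges at both of its ends. A bicolored path or cycle of length 4 has colors
`x, y, x, y`, which forces both `y → x` and `x → y`; so a proper coloring for which `→` is
asymmetric is a star edge coloring. For `G_2` there is a proper 5-coloring, invariant under rotating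
the three branches while permuting the colors `0, 1, 2` cyclically, whose arrows are
`0 → 1 → 2 → 0` and `3 → i → 4` for `i < 3`.
-/

theorem three_le_card_of_ne {α : Type*} [DecidableEq α] {w x y z : α} (hwx : w ≠ x) (hxy : x ≠ y)
    (hyz : y ≠ z) (h : w = y → x ≠ z) : 3 ≤ ({w, x, y, z} : Finset α).card := by
  rw [Nat.succ_le_iff, Finset.two_lt_card]
  by_cases hwy : w = y
  · exact ⟨x, by simp, y, by simp, z, by simp, hxy, h hwy, hyz⟩
  · exact ⟨w, by simp, x, by simp, y, by simp, hwx, hwy, hxy⟩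

theorem IsStarEdgeColoring.of_asymm {V : Type*} {G : SimpleGraph V} {k : ℕ} {c : Sym2 V → ℕ}
    (R : ℕ → ℕ → Prop) [Std.Asymm R] (hlt : ∀ u v, G.Adj u v → c s(u, v) < k)
    (hproper : ∀ a b, G.Adj a b → ∀ b', G.Adj a b' → b ≠ b' → c s(a, b) ≠ c s(a, b'))
    (hR : ∀ t u, G.Adj t u → ∀ v, G.Adj u v → t ≠ v → ∀ w, G.Adj v w → u ≠ w →
      c s(t, u) = c s(v, w) → R (c s(u, v)) (c s(v, w))) :
    IsStarEdgeColoring G k c := by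
  have consecutive_ne {t u v : V} (htu : G.Adj t u) (huv : G.Adj u v) (htv : t ≠ v) :
      c s(t, u) ≠ c s(u, v) :=
    Sym2.eq_swap (a := u) ▸ hproper u t htu.symm v huv htv
  have not_bicolored {v0 v1 v2 v3 v4 : V} (h01 : G.Adj v0 v1) (h12 : G.Adj v1 v2)
      (h23 : G.Adj v2 v3) (h34 : G.Adj v3 v4) (h02 : v0 ≠ v2) (h13 : v1 ≠ v3) (h24 : v2 ≠ v4) :
      3 ≤ ({c s(v0, v1), c s(v1, v2), c s(v2, v3), c s(v3, v4)} : Finset ℕ).card := by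
    refine three_le_card_of_ne (consecutive_ne h01 h12 h02) (consecutive_ne h12 h23 h13)
      (consecutive_ne h23 h34 h24) fun hx hy => ?_
    have hyx : R (c s(v1, v2)) (c s(v2, v3)) := hR v0 v1 h01 v2 h12 h02 v3 h23 h13 hx
    have hxy : R (c s(v2, v3)) (c s(v3, v4)) := hR v1 v2 h12 v3 h23 h13 v4 h34 h24 hy
    exact asymm hyx (hy ▸ hxy)
  refine ⟨Sym2.ind hlt, fun a b b' h h' => hproper a b h b' h', ?_, ?_⟩
  · intro v0 v1 v2 v3 v4 hn h01 h12 h23 h34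
    exact not_bicolored h01 h12 h23 h34 (by grind) (by grind) (by grind)
  · intro v0 v1 v2 v3 hn h01 h12 h23 h30
    exact not_bicolored h01 h12 h23 h30 (by grind) (by grind) (by grind)

instance HalinVert.instFintype (l : ℕ) : Fintype (HalinVert l) :=
  Fintype.ofSurjective
    (Option.map fun p : Fin 3 × Σ n : Fin l, List.Vector (Fin 2) n =>
      ⟨(p.1, p.2.2.1), p.2.2.2.trans_lt p.2.1.2⟩)
    fun
    | none => ⟨none, rfl⟩
    | some ⟨(a, bs), h⟩ => ⟨some (a, ⟨⟨bs.length, h⟩, ⟨bs, rfl⟩⟩), rfl⟩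

instance halinRel.instDecidableRel (l : ℕ) : DecidableRel (halinRel l)
  | none, none | some _, none => inferInstanceAs (Decidable False)
  | none, some q => inferInstanceAs (Decidable (q.1.2 = []))
  | some _, some _ => inferInstanceAs (Decidable ((∃ _, _ ∧ _) ∨ _ ∧ _ ∧ (_ ∨ _ ∧ _)))

instance completeHalin.instDecidableRelAdj (l : ℕ) : DecidableRel (completeHalin l).Adj :=
  inferInstanceAs (DecidableRel (SimpleGraph.fromRel (halinRel l)).Adj)

/-- The color of the edge of `G_2` joining two vertices, with sums taken modulo 3: the edge from the
root to branch `a` gets `a`, the edges from there to the leaves `(a, 0)` and `(a, 1)` get `a + 1`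
and `3`, the edge between these two leaves gets `4`, and the edge from `(a, 1)` to `(a + 1, 0)` gets
`a`. The values at nonadjacent pairs are irrelevant, but keep the function symmetric. -/
def halinTwoColor : HalinVert 2 → HalinVert 2 → ℕ
  | none, none => 0
  | none, some ⟨(a, _), _⟩ | some ⟨(a, _), _⟩, none => a
  | some ⟨(_, []), _⟩, some ⟨(_, []), _⟩ => 0
  | some ⟨(a, []), _⟩, some ⟨(_, b :: _), _⟩ | some ⟨(_, b :: _), _⟩, some ⟨(a, []), _⟩ =>
    if b = 0 then ↑(a + 1) else 3
  | some ⟨(a, _ :: _), _⟩, some ⟨(a', _ :: _), _⟩ =>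
    if a = a' then 4 else if a' = a + 1 then a else a'

theorem halinTwoColor_comm : ∀ u v, halinTwoColor u v = halinTwoColor v u := by
  decide +kernel

/-- The edge coloring of `G_2` given by `halinTwoColor`. -/
def halinTwoColoring : Sym2 (HalinVert 2) → ℕ :=
  Sym2.lift ⟨halinTwoColor, halinTwoColor_comm⟩

/-- The arrows `y → x` between the colors of `halinTwoColoring`: the 3-cycle `0 → 1 → 2 → 0`
together with `3 → i → 4` for `i < 3`. -/
abbrev HalinTwoArrow (y x : ℕ) : Prop :=
  (y < 3 ∧ x = (y + 1) % 3) ∨ (y = 3 ∧ x < 3) ∨ (y < 3 ∧ x = 4)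

instance HalinTwoArrow.instAsymm : Std.Asymm HalinTwoArrow where
  asymm _ _ := by omega

theorem halinTwoColoring_lt_five :
    ∀ u v, (completeHalin 2).Adj u v → halinTwoColoring s(u, v) < 5 := by
  decide +kernel

theorem halinTwoColoring_proper :
    ∀ a b, (completeHalin 2).Adj a b → ∀ b', (completeHalin 2).Adj a b' → b ≠ b' →
      halinTwoColoring s(a, b) ≠ halinTwoColoring s(a, b') := by
  decide +kernel

-- Up to rotation the middle edge `uv` joins the root to a branch (`a → a + 1`), a branch to its
-- second leaf (`3 → a`), or leaves of different branches (`a → 4`).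
set_option synthInstance.maxSize 1000 in
theorem halinTwoColoring_arrow :
    ∀ t u, (completeHalin 2).Adj t u → ∀ v, (completeHalin 2).Adj u v → t ≠ v →
      ∀ w, (completeHalin 2).Adj v w → u ≠ w →
        halinTwoColoring s(t, u) = halinTwoColoring s(v, w) →
          HalinTwoArrow (halinTwoColoring s(u, v)) (halinTwoColoring s(v, w)) := by
  decide +kernel

/-- The complete cubic Halin graph `G_2` admits a star 5-edge coloring. -/
theorem completeHalin_two_star5 :
    ∃ c : Sym2 (HalinVert 2) → ℕ, IsStarEdgeColoring (completeHalin 2) 5 c :=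
  ⟨halinTwoColoring, .of_asymm HalinTwoArrow halinTwoColoring_lt_five halinTwoColoring_proper
    halinTwoColoring_arrow⟩
end

section
/- For every l ≥ 1, if the complete cubic Halin graph G_l admits a star 5-edge coloring, then the complete cubic Halin graph G_{l+3} also admits a star 5-edge coloring. -/
/-!
A proper edge coloring is a star coloring iff no vertex has two edges each of whose colors occurs
at the far end of the other one, so only the palettes of the neighbors of a vertex matter. In `G_l`,
replace every leaf by a complete binary tree of depth 3, whose bottom level joins the new outer
cycle; this gives `G_{l+3}`. The three edges at the old leaf become the edges leaving the block, at
its root and at its two bottom corners. One fixed coloring of the block stays star even if every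
vertex outside the block sees all five colors, so after a permutation of the colors it can be
inserted at every leaf; and a vertex inside the old tree does not notice the change, because the
root of a block has the palette of the leaf it replaces.
-/

theorem three_le_card_iff {C : Type*} [DecidableEq C] {p q r s : C} (hpq : p ≠ q) (hqr : q ≠ r)
    (hrs : r ≠ s) : 3 ≤ ({p, q, r, s} : Finset C).card ↔ ¬(p = r ∧ q = s) := by
  by_cases hpr : p = r <;> by_cases hqs : q = s <;> by_cases hps : p = s <;>
    simp_all [Finset.card_insert_of_notMem]

section Palette

variable {V C : Type*} {G : SimpleGraph V} {c : Sym2 V → C}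

/-- An edge coloring in which any two edges at a common vertex have different colors. -/
def IsProperEdgeColoring (G : SimpleGraph V) (c : Sym2 V → C) : Prop :=
  ∀ v x y, G.Adj v x → G.Adj v y → x ≠ y → c s(v, x) ≠ c s(v, y)

/-- The set of colors of the edges at a vertex. -/
def edgePalette (G : SimpleGraph V) (c : Sym2 V → C) (v : V) : Set C :=
  {a | ∃ w, G.Adj v w ∧ c s(v, w) = a}

theorem IsProperEdgeColoring.color_ne (hc : IsProperEdgeColoring G c) {u v w : V}
    (huv : G.Adj u v) (hvw : G.Adj v w) (huw : u ≠ w) : c s(u, v) ≠ c s(v, w) := by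
  rw [Sym2.eq_swap]
  exact hc v u w huv.symm hvw huw

theorem IsProperEdgeColoring.ne_of_color_eq (hc : IsProperEdgeColoring G c) {v x y w : V}
    (hx : G.Adj v x) (hy : G.Adj v y) (hxy : x ≠ y) (hw : G.Adj x w)
    (hcolor : c s(x, w) = c s(v, y)) : w ≠ v ∧ w ≠ y := by
  constructor
  · rintro rfl
    exact hc.color_ne hw hy hxy hcolor
  · rintro rfl
    exact hc.color_ne hw hy.symm hx.ne' (hcolor.trans (congrArg c Sym2.eq_swap))

theorem IsProperEdgeColoring.three_le_card_iff [DecidableEq C] (hc : IsProperEdgeColoring G c)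
    {v₀ v₁ v₂ v₃ v₄ : V} (h₀₁ : G.Adj v₀ v₁) (h₁₂ : G.Adj v₁ v₂) (h₂₃ : G.Adj v₂ v₃)
    (h₃₄ : G.Adj v₃ v₄) (h₀₂ : v₀ ≠ v₂) (h₁₃ : v₁ ≠ v₃) (h₂₄ : v₂ ≠ v₄) :
    3 ≤ ({c s(v₀, v₁), c s(v₁, v₂), c s(v₂, v₃), c s(v₃, v₄)} : Finset C).card ↔
      ¬(c s(v₀, v₁) = c s(v₂, v₃) ∧ c s(v₁, v₂) = c s(v₃, v₄)) :=
  _root_.three_le_card_iff (hc.color_ne h₀₁ h₁₂ h₀₂) (hc.color_ne h₁₂ h₂₃ h₁₃)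
    (hc.color_ne h₂₃ h₃₄ h₂₄)

end Palette

section StarPalette

variable {V : Type*} {G : SimpleGraph V} {k : ℕ} {c : Sym2 V → ℕ}

theorem IsStarEdgeColoring.notMem_edgePalette (hc : IsStarEdgeColoring G k c) {v x y : V}
    (hx : G.Adj v x) (hy : G.Adj v y) (hxy : x ≠ y) (hmem : c s(v, y) ∈ edgePalette G c x) :
    c s(v, x) ∉ edgePalette G c y := by
  obtain ⟨-, hproper : IsProperEdgeColoring G c, hpath, hcycle⟩ := hc
  obtain ⟨w, hw, hwcolor⟩ := hmem
  rintro ⟨z, hz, hzcolor⟩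
  obtain ⟨hwv, hwy⟩ := hproper.ne_of_color_eq hx hy hxy hw hwcolor
  obtain ⟨hzv, hzx⟩ := hproper.ne_of_color_eq hy hx hxy.symm hz hzcolor
  rcases eq_or_ne w z with rfl | hwz
  · refine (hproper.three_le_card_iff hx hw hz.symm hy.symm hwv.symm hxy hwv).1
      (hcycle v x w y ?_ hx hw hz.symm hy.symm) ⟨?_, ?_⟩
    · simp [hx.ne, hwv.symm, hy.ne, hw.ne, hxy, hwy]
    · rw [← hzcolor, Sym2.eq_swap]
    · rw [hwcolor, Sym2.eq_swap]
  · refine (hproper.three_le_card_iff hw.symm hx.symm hy hz hwv hxy hzv.symm).1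
      (hpath w x v y z ?_ hw.symm hx.symm hy hz) ⟨?_, ?_⟩
    · simp [hw.ne', hwv, hwy, hwz, hx.ne', hxy, hzx.symm, hy.ne, hzv.symm, hz.ne]
    · rw [Sym2.eq_swap, hwcolor]
    · rw [Sym2.eq_swap, hzcolor]

theorem IsProperEdgeColoring.isStarEdgeColoring (hproper : IsProperEdgeColoring G c)
    (hlt : ∀ v w, G.Adj v w → c s(v, w) < k)
    (hstar : ∀ v x y, G.Adj v x → G.Adj v y → x ≠ y →
      c s(v, y) ∈ edgePalette G c x → c s(v, x) ∉ edgePalette G c y) :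
    IsStarEdgeColoring G k c := by
  have hwalk {v₀ v₁ v₂ v₃ v₄ : V} (h₀₂ : v₀ ≠ v₂) (h₁₃ : v₁ ≠ v₃) (h₂₄ : v₂ ≠ v₄)
      (h₀₁ : G.Adj v₀ v₁) (h₁₂ : G.Adj v₁ v₂) (h₂₃ : G.Adj v₂ v₃) (h₃₄ : G.Adj v₃ v₄) :
      3 ≤ ({c s(v₀, v₁), c s(v₁, v₂), c s(v₂, v₃), c s(v₃, v₄)} : Finset ℕ).card := by
    rw [hproper.three_le_card_iff h₀₁ h₁₂ h₂₃ h₃₄ h₀₂ h₁₃ h₂₄]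
    rintro ⟨hleft, hright⟩
    refine hstar v₂ v₁ v₃ h₁₂.symm h₂₃ h₁₃ ⟨v₀, h₀₁.symm, ?_⟩ ⟨v₄, h₃₄, ?_⟩
    · rw [Sym2.eq_swap, hleft]
    · rw [← hright, Sym2.eq_swap]
  refine ⟨Sym2.ind fun v w h => hlt v w h, hproper, fun v₀ v₁ v₂ v₃ v₄ hnodup => ?_,
    fun v₀ v₁ v₂ v₃ hnodup => ?_⟩
  · simp only [List.nodup_cons, List.mem_cons, not_or] at hnodup
    exact hwalk hnodup.1.2.1 hnodup.2.1.2.1 hnodup.2.2.1.2.1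
  · simp only [List.nodup_cons, List.mem_cons, not_or] at hnodup
    exact hwalk hnodup.1.2.1 hnodup.2.1.2.1 (Ne.symm hnodup.1.2.1)

end StarPalette

/-- A simple graph presented by darts: every vertex in `verts` has one dart for each port in `ι`,
and the reverse of the dart leaving `p` through port `s` is the dart with origin and port
`rev p s`. -/
structure PortGraph (X ι : Type*) where
  verts : Set X
  rev : X → ι → X × ι
  rev_mem : ∀ p ∈ verts, ∀ s, (rev p s).1 ∈ verts
  rev_rev : ∀ p ∈ verts, ∀ s, rev (rev p s).1 (rev p s).2 = (p, s)
  nbr_injective : ∀ p ∈ verts, Function.Injective fun s => (rev p s).1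

namespace PortGraph

/-- A star edge coloring in terms of darts: `e p s` is the color of the edge leaving `p` through
port `s`, so that `Set.range (e p)` is the palette of `p`. -/
structure IsStarColoring {X ι C : Type*} (P : PortGraph X ι) (e : X → ι → C) : Prop where
  rev : ∀ p ∈ P.verts, ∀ s, e (P.rev p s).1 (P.rev p s).2 = e p s
  injective : ∀ p ∈ P.verts, Function.Injective (e p)
  star : ∀ p ∈ P.verts, ∀ s t, s ≠ t →
    e p t ∈ Set.range (e (P.rev p s).1) → e p s ∉ Set.range (e (P.rev p t).1)

/-- The statement that `P` becomes the simple graph `G` when each vertex `v` is named `f v`. -/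
structure Presents {X ι V : Type*} (P : PortGraph X ι) (G : SimpleGraph V) (f : V → X) :
    Prop where
  injective : Function.Injective f
  range_eq : Set.range f = P.verts
  adj_iff : ∀ v w, G.Adj v w ↔ ∃ s, (P.rev (f v) s).1 = f w

namespace Presents

variable {X ι V : Type*} {P : PortGraph X ι} {G : SimpleGraph V} {f : V → X}

theorem mem_verts (h : P.Presents G f) (v : V) : f v ∈ P.verts :=
  h.range_eq ▸ Set.mem_range_self v

theorem forall_mem_verts (h : P.Presents G f) {Q : X → Prop} :
    (∀ p ∈ P.verts, Q p) ↔ ∀ v, Q (f v) := by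
  rw [← h.range_eq, Set.forall_mem_range]

theorem exists_nbr_eq (h : P.Presents G f) (v : V) (s : ι) : ∃ w, (P.rev (f v) s).1 = f w := by
  obtain ⟨w, hw⟩ : (P.rev (f v) s).1 ∈ Set.range f := h.range_eq ▸ P.rev_mem _ (h.mem_verts v) s
  exact ⟨w, hw.symm⟩

theorem exists_isStarColoring (h : P.Presents G f) {k : ℕ} [NeZero k] {c : Sym2 V → ℕ}
    (hc : IsStarEdgeColoring G k c) : ∃ e : X → ι → Fin k, P.IsStarColoring e := by
  choose nbr hnbr using h.exists_nbr_eq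
  have hadj (v s) : G.Adj v (nbr v s) := (h.adj_iff _ _).2 ⟨s, hnbr v s⟩
  have hnbr_inj (v) : Function.Injective (nbr v) := fun s t hst =>
    P.nbr_injective _ (h.mem_verts v) (by simp only [hnbr, hst])
  let color (v : V) (s : ι) : Fin k := ⟨c s(v, nbr v s), hc.1 _ (hadj v s)⟩
  let e : X → ι → Fin k := Function.extend f color fun _ _ => 0
  have he (v) : e (f v) = color v := h.injective.extend_apply color _ v
  have hpalette (v a) : a ∈ Set.range (color v) → (a : ℕ) ∈ edgePalette G c v := by
    rintro ⟨s, rfl⟩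
    exact ⟨nbr v s, hadj v s, rfl⟩
  refine ⟨e, h.forall_mem_verts.2 fun v s => ?_, h.forall_mem_verts.2 fun v => ?_,
    h.forall_mem_verts.2 fun v s t hst => ?_⟩
  · have hback : nbr (nbr v s) (P.rev (f v) s).2 = v := h.injective <| by
      rw [← hnbr, ← hnbr, P.rev_rev _ (h.mem_verts v)]
    rw [hnbr, he, he, Fin.ext_iff]
    simp only [color, hback, Sym2.eq_swap]
  · rw [he]
    exact fun s t hst => by_contra fun hne => hc.2.1 _ _ _ (hadj v s) (hadj v t)
      ((hnbr_inj v).ne hne) (congrArg Fin.val hst)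
  · simp only [hnbr, he]
    exact fun hmem hmem' => hc.notMem_edgePalette (hadj v s) (hadj v t) ((hnbr_inj v).ne hst)
      (hpalette _ _ hmem) (hpalette _ _ hmem')

theorem exists_edge_color (h : P.Presents G f) {C : Type*} [Nonempty C] {e : X → ι → C}
    (he : P.IsStarColoring e) (z : Sym2 V) :
    ∃ a : C, ∀ v w s, s(v, w) = z → (P.rev (f v) s).1 = f w → a = e (f v) s := by
  by_cases hz : ∃ v w s, s(v, w) = z ∧ (P.rev (f v) s).1 = f w
  · obtain ⟨v, w, s, rfl, hs⟩ := hz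
    refine ⟨e (f v) s, fun v' w' s' hz hs' => ?_⟩
    rcases Sym2.eq_iff.1 hz with ⟨rfl, rfl⟩ | ⟨rfl, rfl⟩
    · rw [P.nbr_injective _ (h.mem_verts _) (hs.trans hs'.symm)]
    · have hback : (P.rev (f v') (P.rev (f w') s).2).1 = f w' := by
        rw [← hs, P.rev_rev _ (h.mem_verts _)]
      rw [← he.rev _ (h.mem_verts _), hs,
        P.nbr_injective _ (h.mem_verts _) (hback.trans hs'.symm)]
  · exact ⟨Classical.arbitrary C, fun v w s hz' hs => (hz ⟨v, w, s, hz', hs⟩).elim⟩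

theorem exists_isStarEdgeColoring (h : P.Presents G f) {k : ℕ} [NeZero k] {e : X → ι → Fin k}
    (he : P.IsStarColoring e) : ∃ c, IsStarEdgeColoring G k c := by
  choose c hc using h.exists_edge_color he
  have hcolor {v w s} (hs : (P.rev (f v) s).1 = f w) : c s(v, w) = e (f v) s := hc _ v w s rfl hs
  have hport_ne {v x y s t} (hs : (P.rev (f v) s).1 = f x) (ht : (P.rev (f v) t).1 = f y)
      (hxy : x ≠ y) : s ≠ t := by
    rintro rfl
    exact hxy (h.injective (hs.symm.trans ht))
  have hpalette {v} {a : Fin k} (ha : (a : ℕ) ∈ edgePalette G (fun z => (c z : ℕ)) v) :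
      a ∈ Set.range (e (f v)) := by
    obtain ⟨w, hw, hwa⟩ := ha
    obtain ⟨s, hs⟩ := (h.adj_iff _ _).1 hw
    exact ⟨s, (hcolor hs).symm.trans (Fin.ext hwa)⟩
  have hproper : IsProperEdgeColoring G fun z => (c z : ℕ) := by
    intro v x y hx hy hxy heq
    obtain ⟨s, hs⟩ := (h.adj_iff _ _).1 hx
    obtain ⟨t, ht⟩ := (h.adj_iff _ _).1 hy
    refine hport_ne hs ht hxy (he.injective _ (h.mem_verts v) ?_)
    rw [← hcolor hs, ← hcolor ht, Fin.ext heq]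
  refine ⟨_, hproper.isStarEdgeColoring (fun v w _ => (c s(v, w)).isLt) ?_⟩
  intro v x y hx hy hxy hmem hmem'
  obtain ⟨s, hs⟩ := (h.adj_iff _ _).1 hx
  obtain ⟨t, ht⟩ := (h.adj_iff _ _).1 hy
  have hmem := hpalette hmem
  have hmem' := hpalette hmem'
  rw [hcolor ht, ← hs] at hmem
  rw [hcolor hs, ← ht] at hmem'
  exact he.star _ (h.mem_verts v) s t (hport_ne hs ht hxy) hmem hmem'

end Presents

end PortGraph

section Heap

/-- The darts of the cubic graph with vertices `0, 3, 4, …, 2N - 1` in which `0` is adjacent to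
`3, 4, 5`, each `n` with `3 ≤ n < N` has the children `2n` and `2n + 1`, and `N, …, 2N - 1` form a
cycle. Port `0` leads to the parent; the ports `1` and `2` lead to the children or, on the cycle, to
the predecessor and the successor. -/
def heapRev (N n : ℕ) : Fin 3 → ℕ × Fin 3 :=
  if n = 0 then ![(3, 0), (4, 0), (5, 0)] else
    ![if n < 6 then (0, Fin.ofNat 3 n) else (n / 2, if n % 2 = 0 then 1 else 2),
      if n < N then (2 * n, 0) else (if n = N then 2 * N - 1 else n - 1, 2),
      if n < N then (2 * n + 1, 0) else (if n + 1 = 2 * N then N else n + 1, 1)]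

variable {N n : ℕ}

theorem heapRev_root (N : ℕ) (s : Fin 3) : heapRev N 0 s = ((s : ℕ) + 3, 0) := by
  fin_cases s <;> rfl

theorem heapRev_zero (N : ℕ) (hn : 3 ≤ n) : heapRev N n 0 =
    if n < 6 then (0, Fin.ofNat 3 n) else (n / 2, if n % 2 = 0 then 1 else 2) := by
  simp [heapRev, show n ≠ 0 by lia]

theorem heapRev_one (N : ℕ) (hn : 3 ≤ n) : heapRev N n 1 =
    if n < N then (2 * n, 0) else (if n = N then 2 * N - 1 else n - 1, 2) := by
  simp [heapRev, show n ≠ 0 by lia]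

theorem heapRev_two (N : ℕ) (hn : 3 ≤ n) : heapRev N n 2 =
    if n < N then (2 * n + 1, 0) else (if n + 1 = 2 * N then N else n + 1, 1) := by
  simp [heapRev, show n ≠ 0 by lia]

theorem heapRev_heapRev_zero (hn : 3 ≤ n) (hnN : n < 2 * N) :
    heapRev N (heapRev N n 0).1 (heapRev N n 0).2 = (n, 0) := by
  rw [heapRev_zero N hn]
  split_ifs with h6 heven
  · rw [heapRev_root]
    interval_cases n <;> rfl
  · rw [heapRev_one N (by lia), if_pos (by lia)]
    grind
  · rw [heapRev_two N (by lia), if_pos (by lia)]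
    grind

theorem heapRev_heapRev_one (hN : 3 ≤ N) (hn : 3 ≤ n) (hnN : n < 2 * N) :
    heapRev N (heapRev N n 1).1 (heapRev N n 1).2 = (n, 1) := by
  rw [heapRev_one N hn]
  split_ifs
  · rw [heapRev_zero N (by lia)]
    grind
  · rw [heapRev_two N (by lia)]
    grind
  · rw [heapRev_two N (by lia)]
    grind

theorem heapRev_heapRev_two (hN : 3 ≤ N) (hn : 3 ≤ n) :
    heapRev N (heapRev N n 2).1 (heapRev N n 2).2 = (n, 2) := by
  rw [heapRev_two N hn]
  split_ifs
  · rw [heapRev_zero N (by lia)]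
    grind
  · rw [heapRev_one N (by lia)]
    grind
  · rw [heapRev_one N (by lia)]
    grind

theorem heapRev_fst_injective (hN : 3 ≤ N) (hn : n = 0 ∨ 3 ≤ n) :
    Function.Injective fun s => (heapRev N n s).1 := by
  rcases hn with rfl | hn
  · intro s t hst
    simpa only [heapRev_root, Nat.add_right_cancel_iff, Fin.val_inj] using hst
  · have h₀₁ : (heapRev N n 0).1 ≠ (heapRev N n 1).1 := by
      rw [heapRev_zero N hn, heapRev_one N hn]
      grind
    have h₀₂ : (heapRev N n 0).1 ≠ (heapRev N n 2).1 := by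
      rw [heapRev_zero N hn, heapRev_two N hn]
      grind
    have h₁₂ : (heapRev N n 1).1 ≠ (heapRev N n 2).1 := by
      rw [heapRev_one N hn, heapRev_two N hn]
      grind
    intro s t hst
    fin_cases s <;> fin_cases t
    all_goals first | rfl | exact absurd hst ‹_› | exact absurd hst.symm ‹_›

/-- The Halin graph with `N` leaves described by `heapRev`; it is the complete cubic Halin graph
`G_l` when `N = 3 * 2 ^ (l - 1)`. -/
def heapHalin (N : ℕ) (hN : 3 ≤ N) : PortGraph ℕ (Fin 3) where
  verts := {n | n = 0 ∨ 3 ≤ n ∧ n < 2 * N}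
  rev := heapRev N
  rev_mem := by
    rintro n (rfl | ⟨hn, hnN⟩) s
    · rw [heapRev_root, Set.mem_ofPred_eq]
      lia
    · rw [Set.mem_ofPred_eq]
      fin_cases s
      · simp only [heapRev_zero N hn, Fin.zero_eta]
        grind
      · simp only [heapRev_one N hn, Fin.mk_one]
        grind
      · simp only [heapRev_two N hn, Fin.reduceFinMk]
        grind
  rev_rev := by
    rintro n (rfl | ⟨hn, hnN⟩) s
    · rw [heapRev_root, heapRev_zero N (by lia), if_pos (by lia)]
      fin_cases s <;> rfl
    · fin_cases s
      · exact heapRev_heapRev_zero hn hnN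
      · exact heapRev_heapRev_one hN hn hnN
      · exact heapRev_heapRev_two hN hn
  nbr_injective _ hn := heapRev_fst_injective hN (hn.imp_right And.left)

end Heap

section HeapIdx

/-- The vertex of the heap encoding that corresponds to the index `(a, bs)`: the level-1 vertex `a`
is `a + 3`, and appending the bit `b` to the index of `n` gives `2 * n + b`. -/
def heapIdx (p : Fin 3 × List (Fin 2)) : ℕ := p.2.foldl (fun n b => 2 * n + b.val) (p.1.val + 3)

variable {l N n : ℕ}

/-- The heap encoding of the vertices of `G_l`. -/
def halinIdx : HalinVert l → ℕ
  | none => 0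
  | some p => heapIdx p.1

theorem heapIdx_nil (a : Fin 3) : heapIdx (a, []) = a + 3 := rfl

theorem heapIdx_concat (a : Fin 3) (bs : List (Fin 2)) (d : Fin 2) :
    heapIdx (a, bs ++ [d]) = 2 * heapIdx (a, bs) + d := by
  simp only [heapIdx, List.foldl_append, List.foldl_cons, List.foldl_nil]

theorem heapIdx_mem_Ico (a : Fin 3) (bs : List (Fin 2)) :
    heapIdx (a, bs) ∈ Set.Ico (3 * 2 ^ bs.length) (2 * (3 * 2 ^ bs.length)) := by
  induction bs using List.reverseRecOn with
  | nil =>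
    rw [heapIdx_nil, Set.mem_Ico, List.length_nil]
    lia
  | append_singleton bs d ih =>
    rw [Set.mem_Ico] at ih ⊢
    rw [heapIdx_concat, List.length_append, List.length_singleton, pow_succ]
    lia

theorem three_le_heapIdx (p : Fin 3 × List (Fin 2)) : 3 ≤ heapIdx p :=
  (Nat.le_mul_of_pos_right 3 (by positivity)).trans (heapIdx_mem_Ico p.1 p.2).1

theorem heapIdx_injective : Function.Injective heapIdx := by
  rintro ⟨a, bs⟩ ⟨a', bs'⟩ h
  induction bs using List.reverseRecOn generalizing bs' with
  | nil =>
    induction bs' using List.reverseRecOn with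
    | nil =>
      rw [heapIdx_nil, heapIdx_nil] at h
      grind
    | append_singleton bs' d' =>
      have := three_le_heapIdx (a', bs')
      rw [heapIdx_nil, heapIdx_concat] at h
      grind
  | append_singleton bs d ih =>
    induction bs' using List.reverseRecOn with
    | nil =>
      have := three_le_heapIdx (a, bs)
      rw [heapIdx_nil, heapIdx_concat] at h
      grind
    | append_singleton bs' d' =>
      rw [heapIdx_concat, heapIdx_concat] at h
      have := ih bs' (by lia)
      grind

theorem exists_heapIdx_eq {n : ℕ} (hn : 3 ≤ n) : ∃ p, heapIdx p = n := by
  induction n using Nat.strong_induction_on with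
  | _ n ih =>
    rcases lt_or_ge n 6 with h6 | h6
    · refine ⟨(⟨n - 3, by lia⟩, []), ?_⟩
      rw [heapIdx_nil]
      lia
    · obtain ⟨⟨a, bs⟩, h⟩ := ih (n / 2) (by lia) (by lia)
      refine ⟨(a, bs ++ [Fin.ofNat 2 n]), ?_⟩
      rw [heapIdx_concat, h, Fin.val_ofNat]
      lia

theorem length_lt_iff_heapIdx_lt (k : ℕ) (p : Fin 3 × List (Fin 2)) :
    p.2.length < k ↔ heapIdx p < 3 * 2 ^ k := by
  have ⟨hle, hlt⟩ := heapIdx_mem_Ico p.1 p.2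
  constructor
  · intro h
    have := Nat.pow_le_pow_right (n := 2) (by lia) h
    rw [pow_succ] at this
    lia
  · intro h
    exact (Nat.pow_lt_pow_iff_right (a := 2) (by lia)).1 (by lia)

theorem heapIdx_eq_add_leafIdx (p : Fin 3 × List (Fin 2)) :
    heapIdx p = 3 * 2 ^ p.2.length + leafIdx (p.2.length + 1) p := by
  obtain ⟨a, bs⟩ := p
  induction bs using List.reverseRecOn with
  | nil => simp [heapIdx, leafIdx, binVal, add_comm]
  | append_singleton bs d ih =>
    rw [heapIdx_concat, ih]
    simp only [leafIdx, binVal, List.foldl_append, List.foldl_cons, List.foldl_nil,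
      List.length_append, List.length_singleton, Nat.add_sub_cancel]
    ring

theorem exists_concat_iff (N : ℕ) (p q : Fin 3 × List (Fin 2)) :
    (∃ d : Fin 2, q.1 = p.1 ∧ q.2 = p.2 ++ [d]) ↔
      (heapRev N (heapIdx q) 0).1 = heapIdx p := by
  have hp := three_le_heapIdx p
  rw [heapRev_zero N (three_le_heapIdx q)]
  constructor
  · rintro ⟨d, h₁, h₂⟩
    obtain rfl : q = (p.1, p.2 ++ [d]) := Prod.ext h₁ h₂
    rw [heapIdx_concat]
    grind
  · intro h
    have heq : q = (p.1, p.2 ++ [Fin.ofNat 2 (heapIdx q)]) := heapIdx_injective <| by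
      rw [heapIdx_concat, Fin.val_ofNat]
      grind
    exact ⟨_, Prod.ext_iff.1 heq⟩

theorem leafIdx_succ_iff {k : ℕ} {p q : Fin 3 × List (Fin 2)} (hp : p.2.length < k + 1)
    (hq : q.2.length < k + 1) :
    (p.2.length = k ∧ q.2.length = k ∧ (leafIdx (k + 1) q = leafIdx (k + 1) p + 1 ∨
      (leafIdx (k + 1) p = 3 * 2 ^ k - 1 ∧ leafIdx (k + 1) q = 0))) ↔
    3 * 2 ^ k ≤ heapIdx p ∧ (heapRev (3 * 2 ^ k) (heapIdx p) 2).1 = heapIdx q := by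
  have hleaf (p : Fin 3 × List (Fin 2)) (hp : p.2.length = k) := hp ▸ heapIdx_eq_add_leafIdx p
  have hlength (p : Fin 3 × List (Fin 2)) (hp : p.2.length < k + 1) :
      p.2.length = k ↔ 3 * 2 ^ k ≤ heapIdx p := by
    rw [← not_lt, ← length_lt_iff_heapIdx_lt]
    lia
  have hp_lt := (length_lt_iff_heapIdx_lt _ p).1 hp
  have hq_lt := (length_lt_iff_heapIdx_lt _ q).1 hq
  rw [heapRev_two _ (three_le_heapIdx p)]
  grind

theorem halinIdx_injective : Function.Injective (halinIdx (l := l)) := by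
  rintro (_ | p) (_ | q) h
  · rfl
  · exact absurd h (Nat.zero_lt_of_lt (three_le_heapIdx q.1)).ne
  · exact absurd h (Nat.zero_lt_of_lt (three_le_heapIdx p.1)).ne'
  · rw [Subtype.ext (heapIdx_injective h)]

theorem range_halinIdx (l : ℕ) :
    Set.range (halinIdx (l := l)) = {n | n = 0 ∨ 3 ≤ n ∧ n < 3 * 2 ^ l} := by
  ext n
  constructor
  · rintro ⟨_ | p, rfl⟩
    · exact Or.inl rfl
    · exact Or.inr ⟨three_le_heapIdx p.1, (length_lt_iff_heapIdx_lt _ _).1 p.2⟩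
  · rintro (rfl | ⟨hn, hlt⟩)
    · exact ⟨none, rfl⟩
    · obtain ⟨p, rfl⟩ := exists_heapIdx_eq hn
      exact ⟨some ⟨p, (length_lt_iff_heapIdx_lt _ _).2 hlt⟩, rfl⟩

theorem halinRel_iff {k : ℕ} (v w : HalinVert (k + 1)) : halinRel (k + 1) v w ↔
    (halinIdx w ≠ 0 ∧ (heapRev (3 * 2 ^ k) (halinIdx w) 0).1 = halinIdx v) ∨
      (3 * 2 ^ k ≤ halinIdx v ∧ (heapRev (3 * 2 ^ k) (halinIdx v) 2).1 = halinIdx w) := by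
  have hpos : 0 < 2 ^ k := by positivity
  rcases v with _ | ⟨⟨a, bs⟩, hp⟩ <;> rcases w with _ | ⟨⟨a', bs'⟩, hq⟩
  · simp [halinRel, halinIdx]
  · have h3 := three_le_heapIdx (a', bs')
    have hlen := length_lt_iff_heapIdx_lt 1 (a', bs')
    rw [Nat.lt_one_iff, List.length_eq_zero_iff] at hlen
    simp only [halinRel, halinIdx, heapRev_zero _ h3, hlen]
    grind
  · have := three_le_heapIdx (a, bs)
    simp only [halinRel, halinIdx, heapRev_two _ this]
    grind
  · have := three_le_heapIdx (a', bs')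
    refine or_congr ?_ (leafIdx_succ_iff hp hq)
    rw [exists_concat_iff (3 * 2 ^ k) (a, bs) (a', bs')]
    simp only [halinIdx]
    grind

theorem heapRev_fst_ne (hN : 3 ≤ N) (hn : n = 0 ∨ 3 ≤ n) (s : Fin 3) : (heapRev N n s).1 ≠ n := by
  rcases hn with rfl | hn
  · rw [heapRev_root]
    lia
  · fin_cases s
    · simp only [heapRev_zero N hn, Fin.zero_eta]
      grind
    · simp only [heapRev_one N hn, Fin.mk_one]
      grind
    · simp only [heapRev_two N hn, Fin.reduceFinMk]
      grind

theorem heapRev_dart_cases (hn : n = 0 ∨ 3 ≤ n) (s : Fin 3) :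
    (n ≠ 0 ∧ s = 0) ∨ ((heapRev N n s).1 ≠ 0 ∧ (heapRev N n s).2 = 0) ∨ (N ≤ n ∧ s = 2) ∨
      (N ≤ (heapRev N n s).1 ∧ (heapRev N n s).2 = 2) := by
  rcases hn with rfl | hn
  · simp [heapRev_root]
  · fin_cases s
    · simp only [Fin.zero_eta]
      lia
    · simp only [heapRev_one N hn, Fin.mk_one]
      grind
    · simp only [heapRev_two N hn, Fin.reduceFinMk]
      grind

theorem exists_heapRev_eq_iff {x y : ℕ} (hN : 3 ≤ N) (hx : x ∈ (heapHalin N hN).verts)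
    (hy : y ∈ (heapHalin N hN).verts) : (∃ s, (heapRev N x s).1 = y) ↔
      ((y ≠ 0 ∧ (heapRev N y 0).1 = x) ∨ (N ≤ x ∧ (heapRev N x 2).1 = y)) ∨
      ((x ≠ 0 ∧ (heapRev N x 0).1 = y) ∨ (N ≤ y ∧ (heapRev N y 2).1 = x)) := by
  have hback : ∀ z ∈ (heapHalin N hN).verts, ∀ s,
      (heapRev N (heapRev N z s).1 (heapRev N z s).2).1 = z := fun z hz s =>
    congrArg Prod.fst ((heapHalin N hN).rev_rev z hz s)
  constructor
  · rintro ⟨s, rfl⟩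
    have hback := hback x hx s
    rcases heapRev_dart_cases (hx.imp_right And.left) s with
      ⟨h, rfl⟩ | ⟨h, hs⟩ | ⟨h, rfl⟩ | ⟨h, hs⟩
    · exact Or.inr (Or.inl ⟨h, rfl⟩)
    · exact Or.inl (Or.inl ⟨h, hs ▸ hback⟩)
    · exact Or.inl (Or.inr ⟨h, rfl⟩)
    · exact Or.inr (Or.inr ⟨h, hs ▸ hback⟩)
  · rintro ((⟨-, rfl⟩ | ⟨-, h⟩) | (⟨-, h⟩ | ⟨-, rfl⟩))
    · exact ⟨_, hback y hy 0⟩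
    · exact ⟨2, h⟩
    · exact ⟨0, h⟩
    · exact ⟨_, hback y hy 2⟩

theorem completeHalin_presents (k : ℕ) (hN : 3 ≤ 3 * 2 ^ k) :
    (heapHalin (3 * 2 ^ k) hN).Presents (completeHalin (k + 1)) halinIdx := by
  have hrange : Set.range (halinIdx (l := k + 1)) = (heapHalin (3 * 2 ^ k) hN).verts := by
    rw [range_halinIdx, pow_succ', Nat.mul_left_comm]
    rfl
  have hmem (v : HalinVert (k + 1)) : halinIdx v ∈ (heapHalin (3 * 2 ^ k) hN).verts :=
    hrange ▸ Set.mem_range_self v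
  refine ⟨halinIdx_injective, hrange, fun v w => ?_⟩
  rw [completeHalin, SimpleGraph.fromRel_adj, halinRel_iff, halinRel_iff,
    ← exists_heapRev_eq_iff hN (hmem v) (hmem w)]
  refine and_iff_right_iff_imp.2 ?_
  rintro ⟨s, hs⟩ rfl
  exact heapRev_fst_ne hN ((hmem v).imp_right And.left) s hs

end HeapIdx

section Block

/-- The vertices of the complete binary tree of depth 3 that replaces a leaf: `(i, r)` is the
vertex number `r` on level `i`. -/
def block : Finset (ℕ × ℕ) := {x ∈ Finset.range 4 ×ˢ Finset.range 8 | x.2 < 2 ^ x.1}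

/-- The darts inside the tree `block`, whose bottom level is made into a path, with the same ports
as in `heapRev`; the value `none` marks the three darts that leave the block. -/
def blockRev (x : ℕ × ℕ) : Fin 3 → Option ((ℕ × ℕ) × Fin 3) :=
  ![if x.1 = 0 then none else some ((x.1 - 1, x.2 / 2), if x.2 % 2 = 0 then 1 else 2),
    if x.1 < 3 then some ((x.1 + 1, 2 * x.2), 0) else
      if x.2 = 0 then none else some ((3, x.2 - 1), 2),
    if x.1 < 3 then some ((x.1 + 1, 2 * x.2 + 1), 0) else
      if x.2 = 7 then none else some ((3, x.2 + 1), 1)]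

/-- The block vertex whose dart with the given port leaves the block. -/
def blockExit : Fin 3 → ℕ × ℕ := ![(0, 0), (3, 0), (3, 7)]

/-- A star coloring of the block in which the dart leaving through port `s` has color `s`. -/
def blockColor : ℕ × ℕ → Fin 3 → Fin 5
  | (0, _) => ![0, 1, 2]
  | (1, 0) => ![1, 2, 3]
  | (1, _) => ![2, 3, 4]
  | (2, 0) => ![2, 0, 3]
  | (2, 1) => ![3, 1, 0]
  | (2, 2) => ![3, 0, 1]
  | (2, _) => ![4, 0, 1]
  | (_, 0) => ![0, 1, 4]
  | (_, 1) => ![3, 4, 0]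
  | (_, 2) => ![1, 0, 2]
  | (_, 3) => ![0, 2, 4]
  | (_, 4) => ![0, 4, 2]
  | (_, 5) => ![1, 2, 3]
  | (_, 6) => ![0, 3, 4]
  | (_, _) => ![1, 4, 2]

/-- The palette of the neighbor of a block vertex through a port. A neighbor outside the block is
assumed to see all colors, so that a coloring that is star for these palettes stays star whatever
the block is attached to. -/
def blockPalette (x : ℕ × ℕ) (s : Fin 3) : Finset (Fin 5) :=
  match blockRev x s with
  | none => Finset.univ
  | some y => Finset.univ.image (blockColor y.1)

theorem mem_block {x : ℕ × ℕ} : x ∈ block ↔ x.1 < 4 ∧ x.2 < 2 ^ x.1 := by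
  have hpow : x.1 < 4 → 2 ^ x.1 ≤ 2 ^ 3 := fun h => Nat.pow_le_pow_right (by lia) (by lia)
  simp only [block, Finset.mem_filter, Finset.mem_product, Finset.mem_range]
  lia

theorem blockExit_mem : ∀ s, blockExit s ∈ block := by decide

theorem eq_blockExit : ∀ x ∈ block, ∀ s, blockRev x s = none → x = blockExit s := by decide

theorem blockRev_mem : ∀ x ∈ block, ∀ s, ∀ y ∈ blockRev x s, y.1 ∈ block := by decide

theorem blockColor_blockExit :
    ∀ s, blockColor (blockExit s) s = Fin.castLE (by decide) s := by decide

theorem blockColor_zero : ∀ s, blockColor (0, 0) s = Fin.castLE (by decide) s := by decide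

theorem blockColor_injective : ∀ x ∈ block, Function.Injective (blockColor x) := by decide

theorem blockColor_blockRev :
    ∀ x ∈ block, ∀ s, ∀ y ∈ blockRev x s, blockColor y.1 y.2 = blockColor x s := by decide

theorem blockColor_star : ∀ x ∈ block, ∀ s t, s ≠ t →
    blockColor x t ∈ blockPalette x s → blockColor x s ∉ blockPalette x t := by decide

/-- The heap encoding of the vertex `x` of the block that replaces the leaf `a`. -/
def blockVertex (a : ℕ) (x : ℕ × ℕ) : ℕ := 2 ^ x.1 * a + x.2

end Block

section Expansion

variable {N n a : ℕ} {x y : ℕ × ℕ} {s t : Fin 3}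

/-- The dart of the graph with `8 * N` leaves that corresponds to a dart of the graph with `N`
leaves, when every leaf is replaced by a block. -/
def liftDart (N : ℕ) (d : ℕ × Fin 3) : ℕ × Fin 3 :=
  (if d.1 < N then d.1 else blockVertex d.1 (blockExit d.2), d.2)

theorem blockVertex_root (a : ℕ) : blockVertex a (0, 0) = a := by
  simp [blockVertex]

theorem le_blockVertex (a : ℕ) (x : ℕ × ℕ) : a ≤ blockVertex a x :=
  (Nat.le_mul_of_pos_left a (by positivity)).trans (Nat.le_add_right _ _)

theorem liftDart_eq_self {d : ℕ × Fin 3} (h : d.1 < N ∨ d.2 = 0) : liftDart N d = d := by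
  rcases h with h | h
  · rw [liftDart, if_pos h]
  · rw [liftDart, h, blockExit, Matrix.cons_val_zero, blockVertex_root, ite_self, ← h]

theorem liftDart_one (h : N ≤ a) : liftDart N (a, 1) = (8 * a, 1) := by
  rw [liftDart, if_neg h.not_gt]
  rfl

theorem liftDart_two (h : N ≤ a) : liftDart N (a, 2) = (8 * a + 7, 2) := by
  rw [liftDart, if_neg h.not_gt]
  rfl

theorem heapRev_eq_of_lt {M : ℕ} (hM : n < M) (hN : n < N) : heapRev M n = heapRev N n := by
  simp [heapRev, hM, hN]

theorem blockVertex_mem_Ico (hN : N ≤ a) (ha : a < 2 * N) (hx : x.2 < 2 ^ x.1) :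
    blockVertex a x ∈ Set.Ico (2 ^ x.1 * N) (2 ^ (x.1 + 1) * N) := by
  constructor
  · exact (Nat.mul_le_mul_left _ hN).trans (Nat.le_add_right _ _)
  · calc 2 ^ x.1 * a + x.2 < 2 ^ x.1 * (a + 1) := by rw [mul_add_one]; lia
      _ ≤ 2 ^ x.1 * (2 * N) := Nat.mul_le_mul_left _ ha
      _ = 2 ^ (x.1 + 1) * N := by ring

theorem exists_blockVertex_eq (h0 : 0 < N) (hn : N ≤ n) (hlt : n < 2 * (8 * N)) :
    ∃ a x, N ≤ a ∧ a < 2 * N ∧ x ∈ block ∧ n = blockVertex a x := by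
  let i := Nat.log 2 (n / N)
  have hpos : 0 < 2 ^ i := by positivity
  have hle : 2 ^ i ≤ n / N := Nat.pow_log_le_self 2 (Nat.div_pos hn h0).ne'
  have hlt' : n / N < 2 ^ (i + 1) := Nat.lt_pow_succ_log_self (by lia) _
  have hi : i < 4 := by
    refine (Nat.pow_lt_pow_iff_right (a := 2) (by lia)).1 (hle.trans_lt ?_)
    rw [Nat.div_lt_iff_lt_mul h0]
    lia
  rw [Nat.le_div_iff_mul_le h0, mul_comm] at hle
  rw [Nat.div_lt_iff_lt_mul h0, pow_succ', mul_right_comm] at hlt'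
  exact ⟨n / 2 ^ i, (i, n % 2 ^ i), (Nat.le_div_iff_mul_le hpos).2 hle,
    (Nat.div_lt_iff_lt_mul hpos).2 hlt', mem_block.2 ⟨hi, Nat.mod_lt _ hpos⟩,
    (Nat.div_add_mod _ _).symm⟩

theorem heapRev_blockVertex (h3 : 3 ≤ N) (hN : N ≤ a) (ha : a < 2 * N) (hx : x ∈ block)
    (hy : blockRev x s = some (y, t)) :
    heapRev (8 * N) (blockVertex a x) s = (blockVertex a y, t) := by
  obtain ⟨i, r⟩ := x
  obtain ⟨hi : i < 4, hr : r < 2 ^ i⟩ := mem_block.1 hx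
  have hle : 3 ≤ blockVertex a (i, r) := (h3.trans hN).trans (le_blockVertex _ _)
  fin_cases s
  · simp only [blockRev, Fin.zero_eta, Matrix.cons_val_zero] at hy
    rw [Fin.zero_eta, heapRev_zero _ hle]
    interval_cases i <;> simp only [blockVertex] <;> grind
  · simp only [blockRev, Fin.mk_one, Matrix.cons_val_one, Matrix.cons_val_zero] at hy
    rw [Fin.mk_one, heapRev_one _ hle]
    interval_cases i <;> simp only [blockVertex] <;> grind
  · simp only [blockRev, Fin.reduceFinMk, Matrix.cons_val] at hy
    simp only [Fin.reduceFinMk, heapRev_two _ hle]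
    interval_cases i <;> simp only [blockVertex] <;> grind

theorem heapRev_liftDart_of_lt (h3 : 3 ≤ N) (ha : a = 0 ∨ 3 ≤ a) (h : a < N) (s : Fin 3) :
    heapRev (8 * N) (liftDart N (a, s)).1 s = liftDart N (heapRev N a s) := by
  rw [liftDart_eq_self (Or.inl h), heapRev_eq_of_lt (by lia) h, liftDart_eq_self]
  rcases ha with rfl | ha
  · rw [heapRev_root]
    exact Or.inr rfl
  · fin_cases s
    · left
      rw [Fin.zero_eta, heapRev_zero _ ha]
      grind
    · right
      rw [Fin.mk_one, heapRev_one _ ha, if_pos h]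
    · right
      simp only [Fin.reduceFinMk, heapRev_two _ ha, if_pos h]

theorem heapRev_liftDart_of_le (h3 : 3 ≤ N) (hN : N ≤ a) (ha : a < 2 * N) (s : Fin 3) :
    heapRev (8 * N) (liftDart N (a, s)).1 s = liftDart N (heapRev N a s) := by
  fin_cases s
  · simp only [Fin.zero_eta, liftDart_eq_self (Or.inr (Eq.refl (a, (0 : Fin 3)).2))]
    rw [heapRev_zero _ (by lia), heapRev_zero _ (by lia), liftDart_eq_self (by left; grind)]
  · rw [Fin.mk_one, liftDart_one hN, heapRev_one _ (by lia),
      if_neg (show ¬8 * a < 8 * N by lia), heapRev_one _ (by lia), if_neg hN.not_gt,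
      liftDart_two (by split_ifs <;> lia)]
    grind
  · simp only [Fin.reduceFinMk]
    rw [liftDart_two hN, heapRev_two _ (by lia), if_neg (show ¬8 * a + 7 < 8 * N by lia),
      heapRev_two _ (by lia), if_neg hN.not_gt, liftDart_one (by split_ifs <;> lia)]
    grind

theorem heapRev_liftDart (h3 : 3 ≤ N) (ha : a ∈ (heapHalin N h3).verts) (s : Fin 3) :
    heapRev (8 * N) (liftDart N (a, s)).1 s = liftDart N (heapRev N a s) := by
  rcases lt_or_ge a N with h | h
  · exact heapRev_liftDart_of_lt h3 (ha.imp_right And.left) h s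
  · exact heapRev_liftDart_of_le h3 h (by rcases ha with rfl | ha <;> lia) s

/-- The coloring of the graph with `8 * N` leaves that keeps the colors `e` away from the blocks and
colors the block of the leaf `a` by `blockColor`, permuted by `φ a`. A vertex `n` outside the old
interior belongs to level `Nat.log 2 (n / N)` of its block. -/
def expandColoring (N : ℕ) (e : ℕ → Fin 3 → Fin 5) (φ : ℕ → Equiv.Perm (Fin 5)) (n : ℕ)
    (s : Fin 3) : Fin 5 :=
  if n < N then e n s else
    φ (n / 2 ^ Nat.log 2 (n / N))
      (blockColor (Nat.log 2 (n / N), n % 2 ^ Nat.log 2 (n / N)) s)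

variable {e : ℕ → Fin 3 → Fin 5} {φ : ℕ → Equiv.Perm (Fin 5)}

theorem expandColoring_of_lt (h : n < N) : expandColoring N e φ n = e n := by
  funext s
  rw [expandColoring, if_pos h]

theorem expandColoring_blockVertex (h0 : 0 < N) (hN : N ≤ a) (ha : a < 2 * N)
    (hx : x.2 < 2 ^ x.1) : expandColoring N e φ (blockVertex a x) = φ a ∘ blockColor x := by
  obtain ⟨hle, hlt⟩ := blockVertex_mem_Ico hN ha hx
  have hlog : Nat.log 2 (blockVertex a x / N) = x.1 :=
    Nat.log_eq_of_pow_le_of_lt_pow ((Nat.le_div_iff_mul_le h0).2 hle)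
      ((Nat.div_lt_iff_lt_mul h0).2 hlt)
  have hdiv : blockVertex a x / 2 ^ x.1 = a := by
    rw [blockVertex, Nat.mul_add_div (by positivity), Nat.div_eq_of_lt hx, add_zero]
  have hmod : blockVertex a x % 2 ^ x.1 = x.2 := by
    rw [blockVertex, Nat.mul_add_mod, Nat.mod_eq_of_lt hx]
  funext s
  rw [expandColoring, if_neg (hN.trans (le_blockVertex a x)).not_gt, hlog, hdiv, hmod]
  rfl

theorem expandColoring_of_lt_two_mul (h0 : 0 < N)
    (hφ : ∀ a ∈ Set.Ico N (2 * N), ∀ s, φ a (Fin.castLE (by decide) s) = e a s) (h : n < 2 * N) :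
    expandColoring N e φ n = e n := by
  rcases lt_or_ge n N with hn | hn
  · exact expandColoring_of_lt hn
  · have hroot := expandColoring_blockVertex (e := e) (φ := φ) (x := (0, 0)) h0 hn h one_pos
    rw [blockVertex_root] at hroot
    funext s
    rw [hroot, Function.comp_apply, blockColor_zero, hφ n ⟨hn, h⟩]

theorem expandColoring_liftDart (h0 : 0 < N)
    (hφ : ∀ a ∈ Set.Ico N (2 * N), ∀ s, φ a (Fin.castLE (by decide) s) = e a s) {d : ℕ × Fin 3}
    (hd : d.1 < 2 * N) :
    expandColoring N e φ (liftDart N d).1 (liftDart N d).2 = e d.1 d.2 := by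
  rcases lt_or_ge d.1 N with h | h
  · rw [liftDart_eq_self (Or.inl h), expandColoring_of_lt h]
  · rw [liftDart, if_neg h.not_gt, expandColoring_blockVertex h0 h hd
      (mem_block.1 (blockExit_mem d.2)).2, Function.comp_apply, blockColor_blockExit,
      hφ d.1 ⟨h, hd⟩]

theorem eq_liftDart_or_blockVertex (h3 : 3 ≤ N) (hn : n = 0 ∨ 3 ≤ n ∧ n < 2 * (8 * N))
    (s : Fin 3) : (∃ a ∈ (heapHalin N h3).verts, n = (liftDart N (a, s)).1) ∨
      ∃ a x y, N ≤ a ∧ a < 2 * N ∧ x ∈ block ∧ blockRev x s = some y ∧ n = blockVertex a x := by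
  rcases lt_or_ge n N with h | h
  · refine Or.inl ⟨n, hn.imp_right fun hn => ⟨hn.1, by lia⟩, ?_⟩
    rw [liftDart_eq_self (Or.inl h)]
  · obtain ⟨a, x, hN, ha, hx, rfl⟩ := exists_blockVertex_eq (by lia) h (by lia)
    rcases hy : blockRev x s with _ | y
    · refine Or.inl ⟨a, Or.inr ⟨h3.trans hN, ha⟩, ?_⟩
      rw [liftDart, if_neg hN.not_gt, ← eq_blockExit x hx s hy]
    · exact Or.inr ⟨a, x, y, hN, ha, hx, hy, rfl⟩

theorem expandColoring_rev (h3 : 3 ≤ N) (he : (heapHalin N h3).IsStarColoring e)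
    (hφ : ∀ a ∈ Set.Ico N (2 * N), ∀ s, φ a (Fin.castLE (by decide) s) = e a s)
    (hn : n = 0 ∨ 3 ≤ n ∧ n < 2 * (8 * N)) (s : Fin 3) :
    expandColoring N e φ (heapRev (8 * N) n s).1 (heapRev (8 * N) n s).2 =
      expandColoring N e φ n s := by
  have h0 : 0 < N := by lia
  have hlt {m} (hm : m ∈ (heapHalin N h3).verts) : m < 2 * N := by rcases hm with rfl | hm <;> lia
  rcases eq_liftDart_or_blockVertex h3 hn s with
    ⟨a, ha, rfl⟩ | ⟨a, x, ⟨y, t⟩, hN, ha, hx, hy, rfl⟩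
  · have hnbr : (heapRev N a s).1 < 2 * N := hlt ((heapHalin N h3).rev_mem a ha s)
    rw [heapRev_liftDart h3 ha, expandColoring_liftDart h0 hφ hnbr]
    exact (he.rev a ha s).trans (expandColoring_liftDart h0 hφ (d := (a, s)) (hlt ha)).symm
  · rw [heapRev_blockVertex h3 hN ha hx hy,
      expandColoring_blockVertex h0 hN ha (mem_block.1 (blockRev_mem x hx s _ hy)).2,
      expandColoring_blockVertex h0 hN ha (mem_block.1 hx).2]
    exact congrArg (φ a) (blockColor_blockRev x hx s _ hy)

theorem range_expandColoring_subset (h3 : 3 ≤ N) (hN : N ≤ a) (ha : a < 2 * N) (hx : x ∈ block)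
    (s : Fin 3) : Set.range (expandColoring N e φ (heapRev (8 * N) (blockVertex a x) s).1) ⊆
      φ a '' blockPalette x s := by
  rcases hy : blockRev x s with _ | ⟨y, t⟩
  · rw [blockPalette, hy, Finset.coe_univ, Set.image_univ_of_surjective (φ a).surjective]
    exact Set.subset_univ _
  · rw [heapRev_blockVertex h3 hN ha hx hy, expandColoring_blockVertex (by lia) hN ha
      (mem_block.1 (blockRev_mem x hx s _ hy)).2, blockPalette, hy, Finset.coe_image,
      Finset.coe_univ, Set.image_univ, Set.range_comp]

theorem expandColoring_star (h3 : 3 ≤ N) (he : (heapHalin N h3).IsStarColoring e)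
    (hφ : ∀ a ∈ Set.Ico N (2 * N), ∀ s, φ a (Fin.castLE (by decide) s) = e a s)
    (hn : n = 0 ∨ 3 ≤ n ∧ n < 2 * (8 * N)) (hst : s ≠ t)
    (hmem : expandColoring N e φ n t ∈ Set.range (expandColoring N e φ (heapRev (8 * N) n s).1)) :
    expandColoring N e φ n s ∉ Set.range (expandColoring N e φ (heapRev (8 * N) n t).1) := by
  have h0 : 0 < N := by lia
  rcases lt_or_ge n N with h | h
  · have hnv : n ∈ (heapHalin N h3).verts := hn.imp_right fun hn => ⟨hn.1, by lia⟩
    have hnbr (u : Fin 3) : expandColoring N e φ (heapRev N n u).1 = e (heapRev N n u).1 :=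
      expandColoring_of_lt_two_mul h0 hφ <| by
        rcases (heapHalin N h3).rev_mem n hnv u with hu | hu
        · exact hu.trans_lt (by lia)
        · exact hu.2
    rw [heapRev_eq_of_lt (by lia) h, expandColoring_of_lt h, hnbr] at hmem ⊢
    exact he.star n hnv s t hst hmem
  · obtain ⟨a, x, hN, ha, hx, rfl⟩ := exists_blockVertex_eq h0 h (by lia)
    have hsub (u : Fin 3) := range_expandColoring_subset (e := e) (φ := φ) h3 hN ha hx u
    have hcolor (u : Fin 3) :
        expandColoring N e φ (blockVertex a x) u = φ a (blockColor x u) := by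
      rw [expandColoring_blockVertex h0 hN ha (mem_block.1 hx).2, Function.comp_apply]
    intro hmem'
    have hmem := hsub s hmem
    have hmem' := hsub t hmem'
    rw [hcolor, (φ a).injective.mem_set_image] at hmem hmem'
    exact blockColor_star x hx s t hst hmem hmem'

theorem expandColoring_isStarColoring (h3 : 3 ≤ N) (h8 : 3 ≤ 8 * N)
    (he : (heapHalin N h3).IsStarColoring e)
    (hφ : ∀ a ∈ Set.Ico N (2 * N), ∀ s, φ a (Fin.castLE (by decide) s) = e a s) :
    (heapHalin (8 * N) h8).IsStarColoring (expandColoring N e φ) where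
  rev _ hn := expandColoring_rev h3 he hφ hn
  injective n hn := by
    rcases lt_or_ge n N with h | h
    · rw [expandColoring_of_lt h]
      exact he.injective n (hn.imp_right fun hn => ⟨hn.1, by lia⟩)
    · obtain ⟨a, x, hN, ha, hx, rfl⟩ :=
        exists_blockVertex_eq (by lia) h (by rcases hn with rfl | hn <;> lia)
      rw [expandColoring_blockVertex (by lia) hN ha (mem_block.1 hx).2]
      exact (φ a).injective.comp (blockColor_injective x hx)
  star _ hn _ _ hst := expandColoring_star h3 he hφ hn hst

theorem exists_isStarColoring_eight_mul (h3 : 3 ≤ N) (h8 : 3 ≤ 8 * N)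
    (h : ∃ e : ℕ → Fin 3 → Fin 5, (heapHalin N h3).IsStarColoring e) :
    ∃ e : ℕ → Fin 3 → Fin 5, (heapHalin (8 * N) h8).IsStarColoring e := by
  obtain ⟨e, he⟩ := h
  have hperm (a : ℕ) : ∃ σ : Equiv.Perm (Fin 5),
      a ∈ Set.Ico N (2 * N) → ∀ s, σ (Fin.castLE (by decide) s) = e a s := by
    by_cases ha : a ∈ Set.Ico N (2 * N)
    · obtain ⟨σ, hσ⟩ := Equiv.Perm.exists_extending_pair (Fin.castLE (by decide)) (e a)
        (Fin.castLE_injective (by decide)) (he.injective a (Or.inr ⟨h3.trans ha.1, ha.2⟩))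
      exact ⟨σ, fun _ => hσ⟩
    · exact ⟨1, fun h => absurd h ha⟩
  choose φ hφ using hperm
  exact ⟨_, expandColoring_isStarColoring h3 h8 he hφ⟩

end Expansion

/-- For every `l ≥ 1`, if `G_l` admits a star 5-edge coloring then so does `G_{l+3}`. -/
theorem completeHalin_star5_step (l : ℕ) (hl : 1 ≤ l)
    (h : ∃ c : Sym2 (HalinVert l) → ℕ, IsStarEdgeColoring (completeHalin l) 5 c) :
    ∃ c : Sym2 (HalinVert (l + 3)) → ℕ, IsStarEdgeColoring (completeHalin (l + 3)) 5 c := by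
  obtain ⟨k, rfl⟩ := Nat.exists_eq_add_of_le' hl
  obtain ⟨c, hc⟩ := h
  have hN : 3 ≤ 3 * 2 ^ k := Nat.le_mul_of_pos_right 3 (by positivity)
  have hleaves : 3 * 2 ^ (k + 3) = 8 * (3 * 2 ^ k) := by ring
  have hpresents := completeHalin_presents (k + 3) (by lia)
  simp only [hleaves] at hpresents
  obtain ⟨e, he⟩ := exists_isStarColoring_eight_mul hN (by lia)
    ((completeHalin_presents k hN).exists_isStarColoring hc)
  exact hpresents.exists_isStarEdgeColoring he
end
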